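/- arXiv:2310.09775 — 2 statements merged into one kernel-verified Lean document; each statement's English description precedes it below -/
import Mathlib

section
/- Let a, b be natural numbers with a ≥ 2 and b ≥ 1. Then ∫_ℝ x/((x−i)^a·(x+i)^b) dx = 2πi·(−1)^{a−1}·i·(2i)^{1−a−b}·(C(a+b−2, a−1) − 2·C(a+b−3, a−2)), where (2i)^{1−a−b} denotes the integer power of 2i with exponent 1−a−b. -/
open MeasureTheory Complex

lemma aux_nsub (x : ℝ) : ‖(x : ℂ) - I‖ ^ 2 = 1 + x ^ 2 := by
  rw [← Complex.normSq_eq_norm_sq, Complex.normSq_apply]; simp; ring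

lemma aux_nadd (x : ℝ) : ‖(x : ℂ) + I‖ ^ 2 = 1 + x ^ 2 := by
  rw [← Complex.normSq_eq_norm_sq, Complex.normSq_apply]; simp; ring

lemma aux_neq (x : ℝ) : ‖(x : ℂ) + I‖ = ‖(x : ℂ) - I‖ := by
  have h := (aux_nadd x).trans (aux_nsub x).symm
  exact (pow_left_inj₀ (norm_nonneg _) (norm_nonneg _) two_ne_zero).1 h

lemma aux_one (x : ℝ) : 1 ≤ ‖(x : ℂ) - I‖ := by
  have := aux_nsub x
  nlinarith [norm_nonneg ((x : ℂ) - I), sq_nonneg x]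

lemma aux_sub_ne (x : ℝ) : (x : ℂ) - I ≠ 0 := by
  intro h; have := aux_one x; rw [h] at this; norm_num at this

lemma aux_add_ne (x : ℝ) : (x : ℂ) + I ≠ 0 := by
  intro h; have := aux_one x; rw [← aux_neq, h] at this; norm_num at this

lemma aux_int (a b : ℕ) (h : 2 ≤ a + b) :
    Integrable (fun x : ℝ => 1 / (((x : ℂ) - I) ^ a * ((x : ℂ) + I) ^ b)) := by
  refine Integrable.mono' integrable_inv_one_add_sq ?_ ?_
  · apply Continuous.aestronglyMeasurable
    refine Continuous.div (by fun_prop) (by fun_prop) ?_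
    intro x
    exact mul_ne_zero (pow_ne_zero _ (aux_sub_ne x)) (pow_ne_zero _ (aux_add_ne x))
  · refine Filter.Eventually.of_forall fun x => ?_
    rw [norm_div, norm_mul, norm_pow, norm_pow, aux_neq, ← pow_add, norm_one, one_div,
      ← aux_nsub x]
    have := aux_one x
    exact inv_anti₀ (by positivity) (pow_le_pow_right₀ this h)

lemma aux_zero (c : ℂ) (hc : ∀ x : ℝ, (x : ℂ) + c ≠ 0) (n : ℕ)
    (hi : Integrable (fun x : ℝ => 1 / ((x : ℂ) + c) ^ (n + 2))) :
    ∫ x : ℝ, 1 / ((x : ℂ) + c) ^ (n + 2) = 0 := by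
  have hn : ((n : ℂ) + 1) ≠ 0 := by exact_mod_cast Nat.succ_ne_zero n
  have key := integral_of_hasDerivAt_of_tendsto
    (f := fun x : ℝ => (-1 / ((n : ℂ) + 1)) * (((x : ℂ) + c) ^ (n + 1))⁻¹)
    (f' := fun x : ℝ => 1 / ((x : ℂ) + c) ^ (n + 2)) (m := 0) (n := 0) ?_ hi ?_ ?_
  · simpa using key
  · intro x
    have h1 : HasDerivAt (fun x : ℝ => (x : ℂ) + c) 1 x :=
      (Complex.ofRealCLM.hasDerivAt (x := x)).add_const c
    have h2 := ((h1.pow (n + 1)).inv (pow_ne_zero _ (hc x))).const_mul (-1 / ((n : ℂ) + 1))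
    have h3 := hc x
    have h4 : 1 / ((x : ℂ) + c) ^ (n + 2) = -1 / ((n : ℂ) + 1) *
        (-(((n + 1 : ℕ) : ℂ) * ((x : ℂ) + c) ^ (n + 1 - 1) * 1) /
          (((x : ℂ) + c) ^ (n + 1)) ^ 2) := by
      rw [Nat.add_sub_cancel]
      push_cast
      field_simp
      ring
    show HasDerivAt _ (1 / ((x : ℂ) + c) ^ (n + 2)) x
    rw [h4]
    exact h2
  all_goals
    rw [← mul_zero (-1 / ((n : ℂ) + 1))]
    refine Filter.Tendsto.const_mul _ ?_
    refine Filter.Tendsto.comp Filter.tendsto_inv₀_cobounded ?_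
    rw [← tendsto_norm_atTop_iff_cobounded]
    simp only [norm_pow]
    refine (Filter.tendsto_pow_atTop (Nat.succ_ne_zero n)).comp ?_
    refine Filter.tendsto_atTop_mono (f := fun x : ℝ => |x| + -‖c‖) ?_ ?_
    · intro x
      have := norm_sub_norm_le (x : ℂ) (-c)
      rw [Complex.norm_real, Real.norm_eq_abs, norm_neg, sub_neg_eq_add] at this
      linarith
    · apply Filter.tendsto_atTop_add_const_right
      first
      | exact Filter.tendsto_abs_atTop_atTop
      | exact Filter.tendsto_abs_atBot_atTop

noncomputable def auxJ (a b : ℕ) : ℂ :=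
  ∫ x : ℝ, 1 / (((x : ℂ) - I) ^ a * ((x : ℂ) + I) ^ b)

lemma auxJ_left (n : ℕ) : auxJ (n + 2) 0 = 0 := by
  have := aux_zero (-I) (fun x => by simpa [sub_eq_add_neg] using aux_sub_ne x) n
    (by simpa [sub_eq_add_neg] using aux_int (n + 2) 0 (by omega))
  simpa [auxJ, sub_eq_add_neg] using this

lemma auxJ_right (n : ℕ) : auxJ 0 (n + 2) = 0 := by
  have := aux_zero I aux_add_ne n
    (by simpa using aux_int 0 (n + 2) (by omega))
  simpa [auxJ] using this

lemma auxJ_base : auxJ 1 1 = Real.pi := by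
  have h : ∀ x : ℝ, 1 / (((x : ℂ) - I) ^ 1 * ((x : ℂ) + I) ^ 1) = (((1 + x ^ 2)⁻¹ : ℝ) : ℂ) := by
    intro x
    push_cast
    rw [one_div]
    congr 1
    linear_combination -I_sq
  simp only [auxJ, h]
  rw [integral_complex_ofReal, integral_univ_inv_one_add_sq]

lemma auxJ_rec (a b : ℕ) (h : 1 ≤ a + b) :
    2 * I * auxJ (a + 1) (b + 1) = auxJ (a + 1) b - auxJ a (b + 1) := by
  unfold auxJ
  rw [← integral_sub (aux_int _ _ (by omega)) (aux_int _ _ (by omega)), ← integral_const_mul]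
  congr 1
  ext x
  have h1 := aux_sub_ne x
  have h2 := aux_add_ne x
  field_simp
  ring

lemma auxJ_val (N : ℕ) : ∀ a b : ℕ, a + b = N → auxJ (a + 1) (b + 1) * (2 * I) ^ (a + b + 1) =
    2 * Real.pi * I * (-1) ^ a * ((a + b).choose a : ℂ) := by
  induction N with
  | zero =>
    intro a b h
    obtain ⟨rfl, rfl⟩ : a = 0 ∧ b = 0 := by omega
    simp [auxJ_base]; ring
  | succ N ih =>
    intro a b h
    have hr := auxJ_rec a b (by omega)
    rcases a with _ | a <;> rcases b with _ | b
    · omega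
    · rw [auxJ_right] at hr
      have := ih 0 b (by omega)
      simp at this hr ⊢
      linear_combination (2 * I) ^ (b + 1) * hr + this
    · rw [auxJ_left] at hr
      have := ih a 0 (by omega)
      simp at this hr ⊢
      linear_combination (2 * I) ^ (a + 1) * hr - this
    · have e1 := ih (a + 1) b (by omega)
      have e2 := ih a (b + 1) (by omega)
      have hc : (((a + 1 + (b + 1)).choose (a + 1) : ℕ) : ℂ) =
          ((a + (b + 1)).choose a : ℂ) + ((a + 1 + b).choose (a + 1) : ℂ) := by
        rw [show a + 1 + (b + 1) = (a + (b + 1)) + 1 by omega, Nat.choose_succ_succ,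
          show a + 1 + b = a + (b + 1) by omega]
        push_cast; rfl
      rw [hc]
      linear_combination (2 * I) ^ (a + b + 2) * hr + e1 - e2

theorem stmt3 (a b : ℕ) (ha : 2 ≤ a) (hb : 1 ≤ b) :
    ∫ x : ℝ, (x : ℂ) / (((x : ℂ) - I) ^ a * ((x : ℂ) + I) ^ b) =
      2 * (Real.pi : ℂ) * I * (-1) ^ (a - 1) * I * (2 * I) ^ ((1 : ℤ) - (a : ℤ) - (b : ℤ)) *
        (((a + b - 2).choose (a - 1) : ℂ) - 2 * ((a + b - 3).choose (a - 2) : ℂ)) := by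
  obtain ⟨a, rfl⟩ := Nat.exists_eq_add_of_le' ha
  obtain ⟨b, rfl⟩ := Nat.exists_eq_add_of_le' hb
  have hsplit : ∫ x : ℝ, (x : ℂ) / (((x : ℂ) - I) ^ (a + 2) * ((x : ℂ) + I) ^ (b + 1)) =
      auxJ (a + 2) b - I * auxJ (a + 2) (b + 1) := by
    unfold auxJ
    rw [← integral_const_mul, ← integral_sub (aux_int _ _ (by omega))
      ((aux_int _ _ (by omega)).const_mul _)]
    congr 1
    ext x
    have h1 := aux_sub_ne x
    have h2 := aux_add_ne x
    field_simp
    ring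
  have hI : (2 * I : ℂ) ≠ 0 := by simp
  rw [hsplit, show (1 : ℤ) - ((a + 2 : ℕ) : ℤ) - ((b + 1 : ℕ) : ℤ) = -((a + b + 2 : ℕ) : ℤ) by
    push_cast; ring, zpow_neg, zpow_natCast]
  rw [show a + 2 + (b + 1) - 2 = a + b + 1 by omega, show a + 2 - 1 = a + 1 by omega,
    show a + 2 + (b + 1) - 3 = a + b by omega, show a + 2 - 2 = a by omega]
  have e1 := auxJ_val _ (a + 1) b rfl
  have e2 : auxJ (a + 2) b * (2 * I) ^ (a + b + 1) =
      2 * Real.pi * I * (-1) ^ (a + 1) * ((a + b).choose (a + 1) : ℂ) := by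
    rcases b with _ | b
    · rw [auxJ_left]; simp
    · have := auxJ_val _ (a + 1) b rfl
      rw [show a + (b + 1) = a + 1 + b by omega]
      exact this
  have hp : (2 * I : ℂ) ^ (a + b + 2) ≠ 0 := pow_ne_zero _ hI
  rw [show a + 1 + b = a + b + 1 by omega] at e1
  have hc : (((a + b + 1).choose (a + 1) : ℕ) : ℂ) =
      ((a + b).choose a : ℂ) + ((a + b).choose (a + 1) : ℂ) := by
    rw [Nat.choose_succ_succ]; push_cast; rfl
  rw [hc] at e1 ⊢
  rw [mul_right_comm, ← div_eq_mul_inv, eq_div_iff hp]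
  linear_combination 2 * I * e2 - I * e1
end

section
/- Let m be a natural number with m ≥ 1. Then ∫_ℝ ((4m−2)·x² − 2)/((x−i)^{m+2}·(x+i)^{m+1}) dx = 2πi·4^{−(m+1)}·( −(4m−2)·(C(2m+1, m+1) − 4·C(2m, m) + 4·C(2m−1, m−1)) − 2·C(2m+1, m+1) ), where 4^{−(m+1)} denotes the integer power of 4 with exponent −(m+1). -/
open MeasureTheory Complex

lemma aux_int_s5 (n : ℕ) : Integrable (fun x : ℝ => ((1 + x ^ 2) ^ (n + 1))⁻¹) := by
  refine integrable_inv_one_add_sq.mono' (Continuous.aestronglyMeasurable ?_) ?_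
  · exact Continuous.inv₀ (by fun_prop) (fun x => by positivity)
  · refine Filter.Eventually.of_forall fun x => ?_
    rw [Real.norm_of_nonneg (by positivity)]
    apply inv_anti₀ (by positivity)
    exact le_self_pow₀ (by nlinarith [sq_nonneg x]) (by omega)

lemma aux_int2 (n : ℕ) : Integrable (fun x : ℝ => x * ((1 + x ^ 2) ^ (n + 2))⁻¹) := by
  refine (aux_int_s5 n).mono' (Continuous.aestronglyMeasurable ?_) ?_
  · exact continuous_id.mul (Continuous.inv₀ (by fun_prop) (fun x => by positivity))
  · refine Filter.Eventually.of_forall fun x => ?_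
    rw [norm_mul, Real.norm_of_nonneg (r := ((1 + x ^ 2) ^ (n + 2))⁻¹) (by positivity),
      Real.norm_eq_abs, pow_succ _ (n + 1), mul_inv, mul_comm, mul_assoc]
    apply mul_le_of_le_one_right (by positivity)
    rw [inv_mul_le_iff₀ (by positivity)]
    nlinarith [sq_nonneg (|x| - 1), sq_abs x]

lemma aux_tend (n : ℕ) (l : Filter ℝ) (hl : Filter.Tendsto (fun x : ℝ => |x|) l Filter.atTop) :
    Filter.Tendsto (fun x : ℝ => x * ((1 + x ^ 2) ^ (n + 1))⁻¹) l (nhds 0) := by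
  refine squeeze_zero_norm' ?_ (tendsto_inv_atTop_zero.comp hl)
  filter_upwards [hl.eventually_gt_atTop 0] with x hx
  simp only [Function.comp]
  rw [norm_mul, Real.norm_of_nonneg (r := ((1 + x ^ 2) ^ (n + 1))⁻¹) (by positivity),
      Real.norm_eq_abs, ← div_eq_mul_inv, div_le_iff₀ (by positivity), ← div_eq_inv_mul,
      le_div_iff₀ hx]
  have : 1 + x ^ 2 ≤ (1 + x ^ 2) ^ (n + 1) :=
    le_self_pow₀ (by nlinarith [sq_nonneg x]) (by omega)
  nlinarith [sq_abs x]

lemma aux_rec (n : ℕ) : (2 * n + 2 : ℝ) * ∫ x : ℝ, ((1 + x ^ 2) ^ (n + 2))⁻¹ =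
    (2 * n + 1) * ∫ x : ℝ, ((1 + x ^ 2) ^ (n + 1))⁻¹ := by
  have h := integral_of_hasDerivAt_of_tendsto
    (f := fun x : ℝ => x * ((1 + x ^ 2) ^ (n + 1))⁻¹)
    (f' := fun x : ℝ => (2 * n + 2 : ℝ) * ((1 + x ^ 2) ^ (n + 2))⁻¹ -
      (2 * n + 1) * ((1 + x ^ 2) ^ (n + 1))⁻¹) (m := 0) (n := 0) ?_
    (((aux_int_s5 (n + 1)).const_mul _).sub ((aux_int_s5 n).const_mul _))
    (aux_tend n _ Filter.tendsto_abs_atBot_atTop) (aux_tend n _ Filter.tendsto_abs_atTop_atTop)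
  · rw [integral_sub ((aux_int_s5 (n + 1)).const_mul _) ((aux_int_s5 n).const_mul _),
      integral_const_mul, integral_const_mul] at h
    linarith
  · intro x
    have hp : (1 + x ^ 2) ≠ 0 := by positivity
    have h1 : HasDerivAt (fun x : ℝ => 1 + x ^ 2) (2 * x) x := by
      simpa using (hasDerivAt_pow 2 x).const_add 1
    have h2 := (hasDerivAt_id x).mul ((h1.pow (n + 1)).inv (pow_ne_zero _ hp))
    refine h2.congr_deriv ?_
    simp only [id, Nat.add_sub_cancel, Pi.pow_apply, Pi.inv_apply]
    push_cast
    field_simp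
    ring

lemma aux_val (n : ℕ) : ∫ x : ℝ, ((1 + x ^ 2) ^ (n + 1))⁻¹ =
    Real.pi * (Nat.centralBinom n) / 4 ^ n := by
  induction n with
  | zero => simp
  | succ n ih =>
    have h := aux_rec n
    rw [ih] at h
    have hc : ((n : ℝ) + 1) * (Nat.centralBinom (n + 1)) = 2 * (2 * n + 1) * Nat.centralBinom n := by
      exact_mod_cast Nat.succ_mul_centralBinom_succ n
    have hn : (2 * n + 2 : ℝ) ≠ 0 := by positivity
    apply mul_left_cancel₀ hn
    rw [h, pow_succ]
    field_simp
    linear_combination (-2) * hc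

theorem stmt5 (m : ℕ) (hm : 1 ≤ m) :
    ∫ x : ℝ, ((4 * (m : ℂ) - 2) * (x : ℂ) ^ 2 - 2) /
        (((x : ℂ) - I) ^ (m + 2) * ((x : ℂ) + I) ^ (m + 1)) =
      2 * (Real.pi : ℂ) * I * (4 : ℂ) ^ (-((m : ℤ) + 1)) *
        (-(4 * (m : ℂ) - 2) *
            (((2 * m + 1).choose (m + 1) : ℂ) - 4 * ((2 * m).choose m : ℂ) +
              4 * ((2 * m - 1).choose (m - 1) : ℂ)) -
          2 * ((2 * m + 1).choose (m + 1) : ℂ)) := by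
  obtain ⟨k, rfl⟩ : ∃ k, m = k + 1 := ⟨m - 1, by omega⟩
  set m := k + 1 with hmk
  let g : ℝ → ℝ := fun x => (4 * m - 2) * ((1 + x ^ 2) ^ (m + 1))⁻¹ -
    4 * m * ((1 + x ^ 2) ^ (m + 2))⁻¹
  let f : ℝ → ℝ := fun x => (4 * m - 2) * (x * ((1 + x ^ 2) ^ (m + 1))⁻¹) -
    4 * m * (x * ((1 + x ^ 2) ^ (m + 2))⁻¹)
  have hg : Integrable g := ((aux_int_s5 m).const_mul _).sub ((aux_int_s5 (m + 1)).const_mul _)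
  have hf : Integrable f := ((aux_int2 k).const_mul _).sub ((aux_int2 m).const_mul _)
  have hfz : ∫ x, f x = 0 := by
    have h1 := integral_neg_eq_self f volume
    have h2 : (fun x => f (-x)) = fun x => - f x := by
      funext x; simp only [f, neg_sq]; ring
    rw [h2, integral_neg] at h1
    linarith
  have hgv : ∫ x, g x = -2 * Real.pi * Nat.centralBinom m / (4 ^ m * (m + 1)) := by
    have hc : ((m : ℝ) + 1) * (Nat.centralBinom (m + 1)) = 2 * (2 * m + 1) * Nat.centralBinom m := by
      exact_mod_cast Nat.succ_mul_centralBinom_succ m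
    have hm1 : (m : ℝ) + 1 ≠ 0 := by positivity
    simp only [g]
    rw [integral_sub ((aux_int_s5 m).const_mul _) ((aux_int_s5 (m + 1)).const_mul _),
      integral_const_mul, integral_const_mul, aux_val, aux_val, pow_succ]
    field_simp
    linear_combination (-4 * (m : ℝ) * 4 ^ k * 4) * hc
  have key : ∀ x : ℝ, ((4 * (m : ℂ) - 2) * (x : ℂ) ^ 2 - 2) /
        (((x : ℂ) - I) ^ (m + 2) * ((x : ℂ) + I) ^ (m + 1)) = (f x : ℂ) + I * (g x : ℂ) := by
    intro x
    have hp : ((1 : ℂ) + x ^ 2) ≠ 0 := by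
      have : (1 + x ^ 2 : ℝ) ≠ 0 := by positivity
      exact_mod_cast this
    have hfac : ((x : ℂ) - I) * (x + I) = 1 + x ^ 2 := by
      linear_combination -I_sq
    have ha : (x : ℂ) - I ≠ 0 := fun h => hp (by rw [← hfac, h, zero_mul])
    have hb : (x : ℂ) + I ≠ 0 := fun h => hp (by rw [← hfac, h, mul_zero])
    have e : (f x : ℂ) + I * (g x : ℂ) =
        ((4 * (m : ℂ) - 2) * (x : ℂ) ^ 2 - 2) * (x + I) / (1 + (x : ℂ) ^ 2) ^ (m + 2) := by
      simp only [f, g]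
      push_cast
      rw [pow_succ _ (m + 1)]
      field_simp
      ring
    rw [e, ← hfac, mul_pow, pow_succ ((x : ℂ) + I) (m + 1)]
    field_simp
  simp_rw [key]
  have hF : Integrable (fun x : ℝ => (f x : ℂ)) := hf.ofReal
  have hG : Integrable (fun x : ℝ => (g x : ℂ)) := hg.ofReal
  rw [integral_add hF (hG.const_mul I), integral_const_mul, integral_complex_ofReal,
    integral_complex_ofReal, hfz, hgv]
  have c1 : ((m : ℂ) + 1) * ((2 * m + 1).choose (m + 1) : ℂ) = (2 * m + 1) * Nat.centralBinom m := by
    have := Nat.add_one_mul_choose_eq (2 * m) m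
    rw [Nat.centralBinom]
    have h2 : (((2 * m + 1) * (2 * m).choose m : ℕ) : ℂ) =
      (((2 * m + 1).choose (m + 1) * (m + 1) : ℕ) : ℂ) := by rw [this]
    push_cast at h2
    linear_combination -h2
  have c2 : (Nat.centralBinom m : ℂ) = 2 * ((2 * m - 1).choose (m - 1) : ℂ) := by
    have h : Nat.centralBinom m = 2 * (2 * m - 1).choose (m - 1) := by
      have h1 := Nat.add_one_mul_choose_eq (2 * k + 1) k
      rw [Nat.centralBinom]
      have e1 : 2 * m - 1 = 2 * k + 1 := by omega
      have e2 : 2 * m = 2 * k + 1 + 1 := by omega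
      rw [e1, e2, hmk, Nat.add_sub_cancel]
      apply Nat.eq_of_mul_eq_mul_right (Nat.succ_pos k)
      simp only [Nat.succ_eq_add_one]
      rw [← h1]; ring
    exact_mod_cast h
  have hm1 : (m : ℂ) + 1 ≠ 0 := by exact_mod_cast Nat.succ_ne_zero m
  have hz : (4 : ℂ) ^ (-((m : ℤ) + 1)) = (4 ^ m * 4)⁻¹ := by
    rw [zpow_neg, ← pow_succ]; norm_cast
  rw [hz, show ((2 * m).choose m : ℂ) = Nat.centralBinom m from rfl]
  have c3 : ((2 * m - 1).choose (m - 1) : ℂ) = Nat.centralBinom m / 2 := by rw [c2]; ring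
  have c4 : ((2 * m + 1).choose (m + 1) : ℂ) = (2 * m + 1) * Nat.centralBinom m / (m + 1) := by
    rw [← c1]; field_simp
  rw [c3, c4]
  clear_value m
  push_cast
  field_simp
  ring
end
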